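/- Let k be a field and let ν be the valuation on the polynomial ring k[x,y] defined by ν(p) := ord_t(p(t, y₀)), where y₀ := Σ_{i=1}^∞ t^{i²} ∈ k((t^ℚ)) and ord_t is the canonical valuation of the Hahn series field k((t^ℚ)) (the minimum of the support). Then for every nonzero p ∈ k[x,y] there exist n₀ ∈ ℕ and a nonzero a ∈ k such that ν(p) = n₀ and ν(p − a·x^{n₀}) > n₀. In particular, the set {x} satisfies (GS3) for ν: the initial form of x generates the associated graded algebra of ν over k. -/

import Mathlib

open Polynomial

/-- The element `t ∈ k((t^ℚ))` (the Hahn series field over `k` with value group `ℚ`). -/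
noncomputable def tt (k : Type*) [Field k] : HahnSeries ℚ k := HahnSeries.single (1 : ℚ) 1

open Classical in
/-- The element `y₀ = Σ_{i≥1} t^(i²) = t + t⁴ + t⁹ + t¹⁶ + ⋯ ∈ k((t^ℚ))`. -/
noncomputable def y0 (k : Type*) [Field k] : HahnSeries ℚ k :=
  HahnSeries.ofPowerSeries ℚ k
    (PowerSeries.mk fun n => if ∃ i : ℕ, 1 ≤ i ∧ n = i ^ 2 then (1 : k) else 0)

/-- The valuation `ν` on `k[x,y]` induced by `x ↦ t`, `y ↦ y₀` and the canonical valuation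
`ord_t` (`HahnSeries.orderTop`, the minimum of the support) of `k((t^ℚ))`. -/
noncomputable def nuEx (k : Type*) [Field k] (p : MvPolynomial (Fin 2) k) : WithTop ℚ :=
  (MvPolynomial.aeval ![tt k, y0 k] p).orderTop

/-!
If `f = ∑ X ^ (i ^ 2)` is transcendental over `k[X]`, then `p ↦ p(X, f)` is injective, and the
leading term `a X ^ n₀` of the power series `p(X, f)` is the initial form of `p` for `ν`.

If `f` were algebraic over `k[X]`, the field `k(X, f)` would be finite over `k(X)`, so every
infinite family of power series in it would satisfy a nontrivial relation `∑ aⱼ gⱼ = 0` with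
polynomials `aⱼ`. Multiplication by a polynomial of degree at most `D` raises exponents by at most
`D`, so at an exponent `n` with no other exponent of the `gⱼ` within distance `D` the relation
reduces to `∑ coeff n gⱼ • aⱼ = 0`. Large squares are such exponents.

* In characteristic zero take `gⱼ = (X d/dX)ʲ f`, which lies in `k(X, f)` because a minimal relation
  for `f` can be differentiated. Now `∑ nʲ aⱼ = 0` for infinitely many `n`, so every `aⱼ` is zero.
* In characteristic `p` take for `gⱼ` the power of `f` with exponent `p ^ (2 j)`: its exponents
  `p ^ (2 j) i ^ 2` are again squares. If `p ∤ i`, then `p ^ (2 j) i ^ 2` is not an exponent of any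
  later member of the family, so the `aⱼ` vanish one after the other.
-/

open scoped PowerSeries IntermediateField

section FracAdjoin

variable {A B : Type*} [CommRing A] [IsDomain A] [CommRing B] [IsDomain B] [Algebra A B]
  [FaithfulSMul A B]

attribute [local instance] FractionRing.liftAlgebra

variable (A) in
/-- The elements of the domain `B` that lie in the field `Frac A (x) ⊆ Frac B`, as a subalgebra
of `B`. -/
noncomputable def fracAdjoin (x : B) : Subalgebra A B :=
  ((FractionRing A)⟮algebraMap B (FractionRing B) x⟯.toSubalgebra.restrictScalars A).comap
      (IsScalarTower.toAlgHom A B (FractionRing B))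

variable {x y z : B}

theorem mem_fracAdjoin_iff : y ∈ fracAdjoin A x ↔ algebraMap B (FractionRing B) y ∈
    (FractionRing A)⟮algebraMap B (FractionRing B) x⟯ :=
  Iff.rfl

theorem self_mem_fracAdjoin : x ∈ fracAdjoin A x :=
  IntermediateField.mem_adjoin_simple_self (FractionRing A) (algebraMap B (FractionRing B) x)

theorem mem_fracAdjoin_of_mul_mem (hy : y ∈ fracAdjoin A x) (hy₀ : y ≠ 0)
    (hyz : y * z ∈ fracAdjoin A x) : z ∈ fracAdjoin A x := by
  rw [mem_fracAdjoin_iff] at *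
  have hdiv := div_mem hyz hy
  rwa [map_mul, mul_div_cancel_left₀] at hdiv
  simpa using hy₀

theorem aeval_mem_fracAdjoin (hy : y ∈ fracAdjoin A x) (P : A[X]) :
    aeval y P ∈ fracAdjoin A x :=
  Algebra.adjoin_le (Set.singleton_subset_iff.mpr hy) (aeval_mem_adjoin_singleton A y)

theorem isIntegral_algebraMap_fractionRing (hx : IsAlgebraic A x) :
    IsIntegral (FractionRing A) (algebraMap B (FractionRing B) x) :=
  ((IsFractionRing.isAlgebraic_iff A (FractionRing A) _).mp hx.algebraMap).isIntegral

theorem isAlgebraic_of_mem_fracAdjoin (hx : IsAlgebraic A x) (hy : y ∈ fracAdjoin A x) :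
    IsAlgebraic A y := by
  have := IntermediateField.isAlgebraic_adjoin_simple (isIntegral_algebraMap_fractionRing hx)
  rw [← isAlgebraic_algebraMap_iff (IsFractionRing.injective B (FractionRing B)),
    IsFractionRing.isAlgebraic_iff A (FractionRing A)]
  exact IntermediateField.isAlgebraic_iff.mp (Algebra.IsAlgebraic.isAlgebraic
    (⟨_, hy⟩ : (FractionRing A)⟮algebraMap B (FractionRing B) x⟯))

theorem not_linearIndependent_of_mem_fracAdjoin {ι : Type*} [Infinite ι] {g : ι → B}
    (hx : IsAlgebraic A x) (hg : ∀ i, g i ∈ fracAdjoin A x) : ¬ LinearIndependent A g := by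
  intro hindep
  have := IntermediateField.adjoin.finiteDimensional (isIntegral_algebraMap_fractionRing hx)
  have hK : LinearIndependent (FractionRing A) fun i ↦ algebraMap B (FractionRing B) (g i) :=
    (LinearIndependent.iff_fractionRing A (FractionRing A)).mp <|
      hindep.map' (IsScalarTower.toAlgHom A B (FractionRing B)).toLinearMap <|
        LinearMap.ker_eq_bot.mpr (IsFractionRing.injective B (FractionRing B))
  have hadjoin : LinearIndependent (FractionRing A)
      fun i ↦ (⟨_, hg i⟩ : (FractionRing A)⟮algebraMap B (FractionRing B) x⟯) :=
    hK.of_comp (IntermediateField.val _).toLinearMap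
  exact (not_finite_iff_infinite.mpr ‹_›) hadjoin.finite

end FracAdjoin

section CharZero

theorem exists_aeval_eq_zero_aeval_derivative_ne_zero {A B : Type*} [CommRing A] [CommRing B]
    [IsDomain A] [CharZero A] [Algebra A B] [FaithfulSMul A B] {y : B} (hy : IsAlgebraic A y) :
    ∃ P : A[X], aeval y P = 0 ∧ aeval y (derivative P) ≠ 0 := by
  obtain ⟨P, ⟨hP₀, hPy⟩, hmin⟩ :=
    WellFounded.has_min (InvImage.wf natDegree wellFounded_lt) {P : A[X] | P ≠ 0 ∧ aeval y P = 0} hy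
  have hdeg : P.natDegree ≠ 0 := by
    intro hdeg
    rw [eq_C_of_natDegree_eq_zero hdeg] at hPy hP₀
    simp_all
  refine ⟨P, hPy, fun hder ↦ hmin (derivative P) ⟨?_, hder⟩ (natDegree_derivative_lt hdeg)⟩
  exact fun h ↦ hdeg (derivative_eq_zero.mp h)

theorem derivation_apply_mem_fracAdjoin {R A B : Type*} [CommRing R] [CommRing A] [IsDomain A]
    [CharZero A] [CommRing B] [IsDomain B] [Algebra R A] [Algebra R B] [Algebra A B]
    [FaithfulSMul A B] {d : Derivation R A A} {δ : Derivation R B B}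
    (hd : ∀ a, algebraMap A B (d a) = δ (algebraMap A B a)) {x y : B} (hx : IsAlgebraic A x)
    (hy : y ∈ fracAdjoin A x) : δ y ∈ fracAdjoin A x := by
  obtain ⟨P, hPy, hdPy⟩ :=
    exists_aeval_eq_zero_aeval_derivative_ne_zero (isAlgebraic_of_mem_fracAdjoin hx hy)
  refine mem_fracAdjoin_of_mul_mem (aeval_mem_fracAdjoin hy (derivative P)) hdPy ?_
  have hderiv : δ (aeval y P) = aeval y (PolynomialModule.equivPolynomialSelf (d.mapCoeffs P)) +
      aeval y (derivative P) * δ y := by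
    convert! Derivation.apply_aeval_eq' d δ (Algebra.linearMap A B) hd y P
    simp
  rw [hPy, map_zero, eq_comm, add_comm, add_eq_zero_iff_eq_neg] at hderiv
  rw [hderiv]
  exact neg_mem (aeval_mem_fracAdjoin hy _)

end CharZero

section IsIsolatedIn

/-- `n` is the only possible element of `S` at distance at most `D` from `n`. -/
def IsIsolatedIn (S : Set ℕ) (D n : ℕ) : Prop :=
  ∀ m ∈ S, m ≤ n + D → n ≤ m + D → m = n

theorem IsIsolatedIn.mono {S T : Set ℕ} {D n : ℕ} (hT : IsIsolatedIn T D n) (hST : S ⊆ T) :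
    IsIsolatedIn S D n :=
  fun m hm ↦ hT m (hST hm)

theorem IsIsolatedIn.image_mul_left {S : Set ℕ} {D n c : ℕ} (h : IsIsolatedIn S D n) (hc : 0 < c) :
    IsIsolatedIn ((c * ·) '' S) D (c * n) := by
  rintro _ ⟨m, hm, rfl⟩ hmn hnm
  dsimp only at hmn hnm
  rw [h m hm (by nlinarith) (by nlinarith)]

theorem isIsolatedIn_sq {D i : ℕ} (hi : D < i) :
    IsIsolatedIn {n | ∃ j : ℕ, n = j ^ 2} D (i ^ 2) := by
  rintro _ ⟨j, rfl⟩ hji hij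
  rcases lt_trichotomy j i with hlt | rfl | hlt
  · nlinarith
  · rfl
  · nlinarith

variable {R : Type*} [CommSemiring R]

theorem coeff_add_polynomial_smul {a : R[X]} {f : R⟦X⟧} {D m n : ℕ} (ha : a.natDegree ≤ D)
    (hf : IsIsolatedIn {i | PowerSeries.coeff i f ≠ 0} D n) (hm : m ≤ D) :
    PowerSeries.coeff (m + n) (a • f) = a.coeff m * PowerSeries.coeff n f := by
  have hterm (i j : ℕ) (hij : i + j = m + n) (hne : a.coeff i * PowerSeries.coeff j f ≠ 0) :
      j = n := by
    have hi := le_natDegree_of_ne_zero (left_ne_zero_of_mul hne)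
    exact hf j (right_ne_zero_of_mul hne) (by lia) (by lia)
  rw [Algebra.smul_def, PowerSeries.algebraMap_apply', PowerSeries.coeff_mul,
    Finset.sum_eq_single_of_mem (m, n) (by simp)]
  · simp
  · rintro ⟨i, j⟩ hij hne
    rw [Finset.HasAntidiagonal.mem_antidiagonal] at hij
    contrapose! hne
    obtain rfl := hterm i j hij (by simpa using hne)
    exact Prod.ext (Nat.add_right_cancel hij) rfl

theorem sum_coeff_smul_eq_zero {ι : Type*} {s : Finset ι} {a : ι → R[X]} {g : ι → R⟦X⟧} {D n : ℕ}
    (ha : ∀ i ∈ s, (a i).natDegree ≤ D)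
    (hg : ∀ i ∈ s, IsIsolatedIn {m | PowerSeries.coeff m (g i) ≠ 0} D n)
    (hsum : ∑ i ∈ s, a i • g i = 0) : ∑ i ∈ s, PowerSeries.coeff n (g i) • a i = 0 := by
  ext m
  rw [finsetSum_coeff, coeff_zero]
  rcases le_or_gt m D with hm | hm
  · rw [← map_zero (PowerSeries.coeff (m + n)), ← hsum, map_sum]
    refine Finset.sum_congr rfl fun i hi ↦ ?_
    rw [coeff_add_polynomial_smul (ha i hi) (hg i hi) hm, coeff_smul, smul_eq_mul, mul_comm]
  · refine Finset.sum_eq_zero fun i hi ↦ ?_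
    rw [coeff_smul, coeff_eq_zero_of_natDegree_lt ((ha i hi).trans_lt hm), smul_zero]

end IsIsolatedIn

instance {R : Type*} [CommSemiring R] : FaithfulSMul R[X] R⟦X⟧ := by
  rw [faithfulSMul_iff_algebraMap_injective]
  intro a b hab
  simpa [PowerSeries.algebraMap_apply'] using hab

section EulerDerivation

variable {R : Type*} [CommRing R]

variable (R) in
/-- The Euler derivation `X · d/dX` on power series. -/
noncomputable def eulerDerivation : Derivation R R⟦X⟧ R⟦X⟧ :=
  (PowerSeries.X : R⟦X⟧) • PowerSeries.derivative R

theorem eulerDerivation_algebraMap (a : R[X]) :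
    algebraMap R[X] R⟦X⟧ (((X : R[X]) • derivative' : Derivation R R[X] R[X]) a) =
      eulerDerivation R (algebraMap R[X] R⟦X⟧ a) := by
  simp [eulerDerivation, PowerSeries.algebraMap_apply', PowerSeries.derivative_coe]

theorem coeff_eulerDerivation (f : R⟦X⟧) (n : ℕ) :
    PowerSeries.coeff n (eulerDerivation R f) = n * PowerSeries.coeff n f := by
  cases n <;> simp [eulerDerivation, PowerSeries.coeff_succ_X_mul, PowerSeries.coeff_derivative,
    mul_comm]

theorem coeff_iterate_eulerDerivation (f : R⟦X⟧) (j n : ℕ) :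
    PowerSeries.coeff n ((eulerDerivation R)^[j] f) = n ^ j * PowerSeries.coeff n f := by
  induction j with
  | zero => simp
  | succ j ih => rw [Function.iterate_succ_apply', coeff_eulerDerivation, ih, pow_succ', mul_assoc]

variable [IsDomain R] [CharZero R]

theorem eq_zero_of_infinite_sum_pow_smul_eq_zero {s : Finset ℕ} {a : ℕ → R[X]}
    (h : {n : ℕ | ∑ j ∈ s, (n : R) ^ j • a j = 0}.Infinite) {j : ℕ} (hj : j ∈ s) : a j = 0 := by
  classical
  have hroot : ∑ i ∈ s, monomial i (a i) = 0 := by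
    refine eq_zero_of_infinite_isRoot _ ((h.image (Nat.cast_injective (R := R[X])).injOn).mono ?_)
    rintro _ ⟨n, hn, rfl⟩
    simpa [IsRoot, eval_finsetSum, eval_monomial, mul_comm, Algebra.smul_def] using hn
  simpa [finsetSum_coeff, coeff_monomial, hj] using congrArg (coeff · j) hroot

theorem linearIndependent_iterate_eulerDerivation {f : R⟦X⟧}
    (hf : ∀ D, {n | PowerSeries.coeff n f ≠ 0 ∧
      IsIsolatedIn {m | PowerSeries.coeff m f ≠ 0} D n}.Infinite) :
    LinearIndependent R[X] fun j ↦ (eulerDerivation R)^[j] f := by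
  rw [linearIndependent_iff']
  intro s a hsum j hj
  refine eq_zero_of_infinite_sum_pow_smul_eq_zero ((hf (s.sup (natDegree ∘ a))).mono ?_) hj
  rintro n ⟨hn, hiso⟩
  have hcoeff := sum_coeff_smul_eq_zero (n := n)
    (fun i hi ↦ Finset.le_sup (f := natDegree ∘ a) hi)
    (fun i _ ↦ hiso.mono fun m hm ↦ ?_) hsum
  · simp only [coeff_iterate_eulerDerivation, mul_comm _ (PowerSeries.coeff n f), mul_smul,
      ← Finset.smul_sum] at hcoeff
    exact (smul_eq_zero_iff_right hn).mp hcoeff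
  · rw [Set.mem_ofPred_eq, coeff_iterate_eulerDerivation] at hm
    exact right_ne_zero_of_mul hm

theorem transcendental_of_isIsolatedIn_of_charZero {f : R⟦X⟧}
    (hf : ∀ D, {n | PowerSeries.coeff n f ≠ 0 ∧
      IsIsolatedIn {m | PowerSeries.coeff m f ≠ 0} D n}.Infinite) :
    Transcendental R[X] f := by
  intro halg
  have hmem (j : ℕ) : (eulerDerivation R)^[j] f ∈ fracAdjoin R[X] f := by
    induction j with
    | zero => exact self_mem_fracAdjoin
    | succ j ih =>
      rw [Function.iterate_succ_apply']
      exact derivation_apply_mem_fracAdjoin eulerDerivation_algebraMap halg ih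
  exact not_linearIndependent_of_mem_fracAdjoin halg hmem
    (linearIndependent_iterate_eulerDerivation hf)

end EulerDerivation

section Frobenius

variable {R : Type*} [CommRing R] {p : ℕ} [ExpChar R p]

theorem pow_expChar_pow_eq_expand (f : R⟦X⟧) (m : ℕ) :
    f ^ p ^ m = PowerSeries.expand (p ^ m) (pow_ne_zero m (expChar_ne_zero R p))
      (PowerSeries.map (iterateFrobenius R p m) f) := by
  rw [← PowerSeries.map_expand]
  exact (MvPowerSeries.map_iterateFrobenius_expand p (expChar_ne_zero R p) f m).symm

theorem coeff_mul_pow_expChar_pow (f : R⟦X⟧) (m n : ℕ) :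
    PowerSeries.coeff (p ^ m * n) (f ^ p ^ m) = PowerSeries.coeff n f ^ p ^ m := by
  rw [pow_expChar_pow_eq_expand, PowerSeries.coeff_expand_mul, PowerSeries.coeff_map,
    iterateFrobenius_def]

theorem dvd_of_coeff_pow_expChar_pow_ne_zero {f : R⟦X⟧} {m n : ℕ}
    (h : PowerSeries.coeff n (f ^ p ^ m) ≠ 0) : p ^ m ∣ n := by
  contrapose! h
  rw [pow_expChar_pow_eq_expand, PowerSeries.coeff_expand_of_not_dvd _ _ _ h]

variable {e : ℕ} {S : Set ℕ} {f : R⟦X⟧}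

theorem isIsolatedIn_coeff_pow_expChar_pow (hS : ∀ n ∈ S, p ^ e * n ∈ S)
    (hfS : {m | PowerSeries.coeff m f ≠ 0} ⊆ S) {D n i j : ℕ} (hn : IsIsolatedIn S D n)
    (hji : j ≤ i) :
    IsIsolatedIn {m | PowerSeries.coeff m (f ^ p ^ (e * i)) ≠ 0} D (p ^ (e * j) * n) := by
  refine (hn.image_mul_left (expChar_pow_pos R p (e * j))).mono fun m hm ↦ ?_
  obtain ⟨r, rfl⟩ := dvd_of_coeff_pow_expChar_pow_ne_zero hm
  rw [Set.mem_ofPred_eq, coeff_mul_pow_expChar_pow] at hm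
  have hpow (l : ℕ) : p ^ (e * l) * r ∈ S := by
    induction l with
    | zero => simpa using hfS fun hr ↦ hm (by rw [hr, zero_pow (expChar_pow_pos R p _).ne'])
    | succ l ih => simpa only [mul_add_one, pow_add, mul_left_comm, mul_assoc] using hS _ ih
  refine ⟨p ^ (e * (i - j)) * r, hpow (i - j), ?_⟩
  dsimp only
  rw [← mul_assoc, ← pow_add, ← mul_add, Nat.add_sub_cancel' hji]

variable [IsDomain R]

theorem linearIndependent_pow_expChar_pow (hS : ∀ n ∈ S, p ^ e * n ∈ S)
    (hfS : {m | PowerSeries.coeff m f ≠ 0} ⊆ S)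
    (hf : ∀ D, ∃ n, PowerSeries.coeff n f ≠ 0 ∧ ¬ p ^ e ∣ n ∧ IsIsolatedIn S D n) :
    LinearIndependent R[X] fun j : ℕ ↦ f ^ p ^ (e * j) := by
  rw [linearIndependent_iff']
  intro s a hsum j
  induction j using Nat.strong_induction_on with
  | _ j ih =>
    intro hj
    obtain ⟨n, hn, hpn, hiso⟩ := hf (s.sup (natDegree ∘ a))
    have htail : ∑ i ∈ s with j ≤ i, a i • f ^ p ^ (e * i) = 0 := by
      rw [Finset.sum_filter_of_ne, hsum]
      intro i hi hne
      contrapose! hne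
      rw [ih i hne hi, zero_smul]
    have hcoeff := sum_coeff_smul_eq_zero (n := p ^ (e * j) * n)
      (fun i hi ↦ Finset.le_sup (f := natDegree ∘ a) (Finset.mem_filter.mp hi).1)
      (fun i hi ↦ isIsolatedIn_coeff_pow_expChar_pow hS hfS hiso (Finset.mem_filter.mp hi).2) htail
    rw [Finset.sum_eq_single_of_mem j (by simpa using hj), coeff_mul_pow_expChar_pow] at hcoeff
    · exact (smul_eq_zero_iff_right (pow_ne_zero _ hn)).mp hcoeff
    · intro i hi hij
      have hlt : j + 1 ≤ i := by grind
      suffices hzero : PowerSeries.coeff (p ^ (e * j) * n) (f ^ p ^ (e * i)) = 0 by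
        rw [hzero, zero_smul]
      contrapose! hpn
      refine Nat.dvd_of_mul_dvd_mul_left (expChar_pow_pos R p (e * j)) ?_
      rw [← pow_add, ← mul_add_one]
      exact (pow_dvd_pow p (Nat.mul_le_mul_left e hlt)).trans
        (dvd_of_coeff_pow_expChar_pow_ne_zero hpn)

theorem transcendental_of_isIsolatedIn_of_expChar (hS : ∀ n ∈ S, p ^ e * n ∈ S)
    (hfS : {m | PowerSeries.coeff m f ≠ 0} ⊆ S)
    (hf : ∀ D, ∃ n, PowerSeries.coeff n f ≠ 0 ∧ ¬ p ^ e ∣ n ∧ IsIsolatedIn S D n) :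
    Transcendental R[X] f := fun halg ↦
  not_linearIndependent_of_mem_fracAdjoin halg (fun _ ↦ pow_mem self_mem_fracAdjoin _)
    (linearIndependent_pow_expChar_pow hS hfS hf)

end Frobenius

section SquareSeries

open Classical in
/-- The lacunary power series `∑ X ^ (i ^ 2)`, summed over `i ≥ 1`. -/
noncomputable def squareSeries (R : Type*) [Semiring R] : R⟦X⟧ :=
  PowerSeries.mk fun n ↦ if ∃ i : ℕ, 1 ≤ i ∧ n = i ^ 2 then (1 : R) else 0

variable (R : Type*) [Semiring R]

theorem setOf_coeff_squareSeries_ne_zero_subset :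
    {n | PowerSeries.coeff n (squareSeries R) ≠ 0} ⊆ {n | ∃ i : ℕ, n = i ^ 2} := by
  intro n hn
  by_contra hsq
  refine hn ?_
  rw [squareSeries, PowerSeries.coeff_mk, if_neg]
  exact fun ⟨i, _, hi⟩ ↦ hsq ⟨i, hi⟩

theorem coeff_sq_squareSeries {i : ℕ} (hi : 0 < i) :
    PowerSeries.coeff (i ^ 2) (squareSeries R) = 1 := by
  rw [squareSeries, PowerSeries.coeff_mk, if_pos ⟨i, hi, rfl⟩]

end SquareSeries

section Transcendental

variable (R : Type*) [CommRing R] [IsDomain R]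

theorem transcendental_squareSeries_of_charZero [CharZero R] :
    Transcendental R[X] (squareSeries R) := by
  refine transcendental_of_isIsolatedIn_of_charZero fun D ↦
    ((Set.Ioi_infinite D).image (pow_left_injective two_ne_zero).injOn).mono ?_
  rintro _ ⟨i, hi, rfl⟩
  exact ⟨by simp [coeff_sq_squareSeries R (Nat.zero_lt_of_lt hi)],
    (isIsolatedIn_sq hi).mono (setOf_coeff_squareSeries_ne_zero_subset R)⟩

theorem transcendental_squareSeries_of_charP (p : ℕ) [Fact p.Prime] [CharP R p] :
    Transcendental R[X] (squareSeries R) := by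
  have hp : p.Prime := Fact.out
  refine transcendental_of_isIsolatedIn_of_expChar (p := p) (e := 2) ?_
    (setOf_coeff_squareSeries_ne_zero_subset R) fun D ↦ ⟨(p * D + 1) ^ 2, ?_, ?_, ?_⟩
  · rintro _ ⟨i, rfl⟩
    exact ⟨p * i, (mul_pow p i 2).symm⟩
  · simp [coeff_sq_squareSeries R (Nat.succ_pos (p * D))]
  · rw [Nat.pow_dvd_pow_iff two_ne_zero, Nat.dvd_add_right (dvd_mul_right p D), Nat.dvd_one]
    exact hp.ne_one
  · exact isIsolatedIn_sq (Nat.lt_succ_of_le (Nat.le_mul_of_pos_left D hp.pos))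

theorem transcendental_squareSeries : Transcendental R[X] (squareSeries R) := by
  obtain ⟨p, _⟩ := CharP.exists R
  rcases CharP.char_is_prime_or_zero R p with hp | rfl
  · have : Fact p.Prime := ⟨hp⟩
    exact transcendental_squareSeries_of_charP R p
  · have := CharP.charP_to_charZero R
    exact transcendental_squareSeries_of_charZero R

end Transcendental

theorem algebraicIndependent_X_of_transcendental {R : Type*} [CommRing R] {f : R⟦X⟧}
    (hf : Transcendental R[X] f) : AlgebraicIndependent R ![PowerSeries.X, f] := by
  have haeval : MvPolynomial.aeval ![PowerSeries.X, f] = ((aeval f).restrictScalars R).comp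
      (Bivariate.equivMvPolynomial R).symm.toAlgHom := by
    ext i
    fin_cases i <;> simp [PowerSeries.algebraMap_apply']
  rw [algebraicIndependent_iff]
  intro P hP
  rw [haeval] at hP
  exact (map_eq_zero_iff _ (Bivariate.equivMvPolynomial R).symm.injective).mp
    (transcendental_iff.mp hf _ hP)

section Order

theorem orderTop_ofPowerSeries {Γ R : Type*} [Semiring Γ] [PartialOrder Γ] [IsStrictOrderedRing Γ]
    [Semiring R] (f : R⟦X⟧) :
    (HahnSeries.ofPowerSeries Γ R f).orderTop = WithTop.map ((↑) : ℕ → Γ) f.order := by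
  rcases eq_or_ne f 0 with rfl | hf
  · rw [map_zero, HahnSeries.orderTop_zero, PowerSeries.order_zero]
    rfl
  have horder : (HahnSeries.toPowerSeries.symm f).orderTop = f.order.toNat := by
    refine HahnSeries.orderTop_eq_of_le ?_ fun n hn ↦
      ENat.toNat_le_of_le_natCast (PowerSeries.order_le n ?_)
    · simpa using PowerSeries.coeff_order hf
    · simpa using hn
  rw [HahnSeries.ofPowerSeries_apply, HahnSeries.orderTop_embDomain, horder,
    ← PowerSeries.coe_toNat_order hf]
  rfl

theorem order_lt_order_sub_leadingTerm {R : Type*} [Ring R] (f : R⟦X⟧) :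
    (f.order.toNat : ℕ∞) < (f - PowerSeries.C (PowerSeries.coeff f.order.toNat f) *
      PowerSeries.X ^ f.order.toNat).order := by
  refine (ENat.natCast_lt_natCast.mpr (Nat.lt_succ_self _)).trans_le
    (PowerSeries.nat_le_order _ _ fun n hn ↦ ?_)
  rcases Nat.lt_succ_iff_lt_or_eq.mp hn with hlt | rfl
  · simp [PowerSeries.coeff_X_pow, hlt.ne, PowerSeries.coeff_of_lt_order_toNat n hlt]
  · simp [PowerSeries.coeff_X_pow]

theorem nuEx_eq_order {k : Type*} [Field k] (p : MvPolynomial (Fin 2) k) :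
    nuEx k p = WithTop.map ((↑) : ℕ → ℚ)
      (MvPolynomial.aeval ![PowerSeries.X, squareSeries k] p).order := by
  rw [nuEx, ← orderTop_ofPowerSeries]
  congr 1
  induction p using MvPolynomial.induction_on with
  | C a => rw [MvPolynomial.aeval_C, MvPolynomial.aeval_C, HahnSeries.algebraMap_apply']
  | add p q hp hq => rw [map_add, map_add, map_add, hp, hq]
  | mul_X p i hp =>
    rw [map_mul, map_mul, map_mul, hp]
    congr 1
    fin_cases i
    · simp [tt]
    · simp [y0, squareSeries]

end Order

/-- Example in Section 3.  Let `k` be a field and `ν` the valuation on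
`k[x,y]` given by `ν p = ord_t (p (t, y₀))` where `y₀ = Σ_{i≥1} t^(i²) ∈ k((t^ℚ))`.  Then
for every nonzero `p ∈ k[x,y]` there exist `n₀ ∈ ℕ` and a nonzero `a ∈ k` with `ν p = n₀`
and `ν (p - a • x^n₀) > n₀`.  (In particular `{x}` satisfies (GS3) for `ν`: the initial
form of `x` generates the graded algebra of `ν` over `k`.) -/
theorem example_GS3 (k : Type*) [Field k] :
    ∀ p : MvPolynomial (Fin 2) k, p ≠ 0 →
      ∃ (n₀ : ℕ) (a : k), a ≠ 0 ∧ nuEx k p = (n₀ : WithTop ℚ) ∧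
        (n₀ : WithTop ℚ) <
          nuEx k (p - MvPolynomial.C a * MvPolynomial.X 0 ^ n₀) := by
  intro p hp
  set f := MvPolynomial.aeval ![PowerSeries.X, squareSeries k] p with hf_def
  have hf : f ≠ 0 := fun hf ↦ hp <| algebraicIndependent_iff.mp
    (algebraicIndependent_X_of_transcendental (transcendental_squareSeries k)) p hf
  refine ⟨f.order.toNat, PowerSeries.coeff f.order.toNat f, PowerSeries.coeff_order hf, ?_, ?_⟩
  · rw [nuEx_eq_order, ← hf_def, ← PowerSeries.coe_toNat_order hf]
    rfl
  · have heval : MvPolynomial.aeval ![PowerSeries.X, squareSeries k] (p - MvPolynomial.C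
        (PowerSeries.coeff f.order.toNat f) * MvPolynomial.X 0 ^ f.order.toNat) =
        f - PowerSeries.C (PowerSeries.coeff f.order.toNat f) * PowerSeries.X ^ f.order.toNat := by
      simp [← hf_def]
    rw [nuEx_eq_order, heval]
    exact Nat.strictMono_cast.withTop_map (order_lt_order_sub_leadingTerm f)
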